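/- Let (Ω, π) be a finite probability space with π fully supported and let f : Ω → (0,∞). Then Ent_π(f) ≤ 2·sup{ E_π[f·h̃] : h̃ : Ω → ℝ satisfies E_π[e^{h̃}] = 1 and h̃(ω) ≥ log(1/2) for all ω ∈ Ω }. -/

import Mathlib

/-!
Put `m = E_π f` and test the supremum with `h = log ((f / m + 1) / 2)`. Then `E_π[e^h] = 1` and
`h ≥ log (1 / 2)`, and the AM-GM inequality `g ≤ ((g + 1) / 2) ^ 2` at `g = f / m` gives
`log f - log m ≤ 2 h` pointwise; integrating against `f` yields `Ent_π(f) ≤ 2 E_π[f h]`.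
The real supremum is a genuine one, since `π ω * e^{h ω} ≤ E_π[e^h] = 1` forces
`h ω ≤ -log (π ω)` for every admissible `h`.
-/

open Finset

noncomputable section

/-- Entropy `Ent_π(f) = E_π[f (log f - log E_π f)]`. -/
def entPi {Ω : Type*} [Fintype Ω] (π f : Ω → ℝ) : ℝ :=
  ∑ ω, π ω * f ω * (Real.log (f ω) - Real.log (∑ ω', π ω' * f ω'))

/-- `π` is a fully supported probability vector. -/
def IsProbVec {Ω : Type*} [Fintype Ω] (π : Ω → ℝ) : Prop :=
  (∀ ω, 0 < π ω) ∧ ∑ ω, π ω = 1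

/-- Lemma: relaxed duality formula for the entropy. -/
theorem entropy_le_two_sSup {Ω : Type*} [Fintype Ω] [Nonempty Ω] (π : Ω → ℝ)
    (hπ : IsProbVec π) (f : Ω → ℝ) (hf : ∀ ω, 0 < f ω) :
    entPi π f ≤ 2 * sSup {x : ℝ | ∃ h : Ω → ℝ,
      (∑ ω, π ω * Real.exp (h ω)) = 1 ∧ (∀ ω, Real.log (1 / 2) ≤ h ω) ∧
      x = ∑ ω, π ω * f ω * h ω} := by
  obtain ⟨hpos, hsum⟩ := hπ
  unfold entPi
  set m := ∑ ω, π ω * f ω with hm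
  have hm0 : 0 < m := Finset.sum_pos (fun ω _ => mul_pos (hpos ω) (hf ω)) Finset.univ_nonempty
  have hg : ∀ ω, 0 < f ω / m := fun ω => div_pos (hf ω) hm0
  have hbdd : BddAbove {x : ℝ | ∃ h : Ω → ℝ,
      (∑ ω, π ω * Real.exp (h ω)) = 1 ∧ (∀ ω, Real.log (1 / 2) ≤ h ω) ∧
      x = ∑ ω, π ω * f ω * h ω} := by
    refine ⟨∑ ω, π ω * f ω * (-Real.log (π ω)), ?_⟩
    rintro x ⟨h, h1, -, rfl⟩
    refine Finset.sum_le_sum fun ω _ =>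
      mul_le_mul_of_nonneg_left ?_ (mul_pos (hpos ω) (hf ω)).le
    have hle : π ω * Real.exp (h ω) ≤ 1 := by
      rw [← h1]
      exact Finset.single_le_sum (f := fun ω => π ω * Real.exp (h ω))
        (fun i _ => (mul_pos (hpos i) (Real.exp_pos _)).le) (Finset.mem_univ ω)
    have hlog := Real.log_nonpos (mul_pos (hpos ω) (Real.exp_pos _)).le hle
    rw [Real.log_mul (hpos ω).ne' (Real.exp_pos _).ne', Real.log_exp] at hlog
    linarith
  have hmem : ∑ ω, π ω * f ω * Real.log ((f ω / m + 1) / 2) ≤ sSup {x : ℝ | ∃ h : Ω → ℝ,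
      (∑ ω, π ω * Real.exp (h ω)) = 1 ∧ (∀ ω, Real.log (1 / 2) ≤ h ω) ∧
      x = ∑ ω, π ω * f ω * h ω} := by
    refine le_csSup hbdd ⟨fun ω => Real.log ((f ω / m + 1) / 2), ?_, fun ω => ?_, rfl⟩
    · calc ∑ ω, π ω * Real.exp (Real.log ((f ω / m + 1) / 2))
          = ∑ ω, (π ω * f ω / (2 * m) + π ω / 2) := by
            refine Finset.sum_congr rfl fun ω _ => ?_
            rw [Real.exp_log (by linarith [hg ω])]
            field_simp
        _ = m / (2 * m) + 1 / 2 := by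
            rw [Finset.sum_add_distrib, ← Finset.sum_div, ← Finset.sum_div, hsum]
        _ = 1 := by
            field_simp
            norm_num
    · exact Real.log_le_log (by norm_num) (by linarith [hg ω])
  refine le_trans ?_ (mul_le_mul_of_nonneg_left hmem zero_le_two)
  rw [Finset.mul_sum]
  refine Finset.sum_le_sum fun ω _ => ?_
  have hkey : Real.log (f ω) - Real.log m ≤ 2 * Real.log ((f ω / m + 1) / 2) := by
    rw [← Real.log_div (hf ω).ne' hm0.ne']
    calc Real.log (f ω / m) ≤ Real.log (((f ω / m + 1) / 2) ^ 2) :=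
          Real.log_le_log (hg ω) (by nlinarith [sq_nonneg (f ω / m - 1)])
      _ = 2 * Real.log ((f ω / m + 1) / 2) := by
          rw [Real.log_pow]
          norm_num
  have := mul_le_mul_of_nonneg_left hkey (mul_pos (hpos ω) (hf ω)).le
  linarith
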